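/- arXiv:2307.04069 — 4 statements merged into one kernel-verified Lean document; each statement's English description precedes it below -/
import Mathlib

section
/- For any A ∈ ℝ^{m×n} and b ∈ ℝᵐ, the set S_λ(A,b) is path-connected: for any X₁, X₂ ∈ S_λ(A,b) there exists a continuous map X : [0,1] → S^{n×n} with X(0) = X₁, X(1) = X₂, and X(t) ∈ S_λ(A,b) for all t ∈ [0,1]. In particular, S_λ(A,b) is a connected subset of S^{n×n}. -/
open Matrix

/-- The vector of eigenvalues of a real symmetric matrix, in descending order
(junk value `0` if the matrix is not symmetric). -/
noncomputable def eigs {n : ℕ} (X : Matrix (Fin n) (Fin n) ℝ) : Fin n → ℝ :=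
  if hX : X.IsHermitian then
    fun i => (hX.eigenvalues ∘ Tuple.sort hX.eigenvalues) i.rev
  else fun _ => 0

/-- The eigenvalue constraint set `S_λ(A,b) = {X ∈ S^{n×n} : A λ(X) ≤ b}`. -/
def SLambda {m n : ℕ} (A : Matrix (Fin m) (Fin n) ℝ) (b : Fin m → ℝ) :
    Set (Matrix (Fin n) (Fin n) ℝ) :=
  {X | X.IsHermitian ∧ ∀ i, A.mulVec (eigs X) i ≤ b i}

/-!
Let `C` be a convex set of vectors. An orthogonal diagonalization writes a symmetric matrix as
`X = Q * diagonal (eigs X) * Qᵀ`. The orthogonal group is generated by reflections, and the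
reflection in `vᗮ` varies continuously with `v ≠ 0`, so moving `v` to a multiple of a coordinate
vector joins each reflection, hence `Q`, to a diagonal orthogonal matrix `D` (of signs). Conjugating
`diagonal (eigs X)` along this path keeps the spectrum fixed and joins `X` to
`D * diagonal (eigs X) * Dᵀ = diagonal (eigs X)`. Descending vectors in `C` form a convex set, so
the diagonal matrices reached from two points with spectrum in `C` are joined by a segment.
-/

open Unitary

section Convexity

theorem convex_setOf_antitone {𝕜 α β : Type*} [Semiring 𝕜] [PartialOrder 𝕜] [Preorder α]
    [AddCommMonoid β] [PartialOrder β] [IsOrderedAddMonoid β] [Module 𝕜 β] [PosSMulMono 𝕜 β] :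
    Convex 𝕜 {f : α → β | Antitone f} :=
  fun _ hf _ hg _ _ ha hb _ => (Antitone.const_smul hf ha).add (Antitone.const_smul hg hb)

theorem convex_setOf_mulVec_le {ι κ R : Type*} [Fintype κ] [CommSemiring R] [PartialOrder R]
    [IsOrderedRing R] (A : Matrix ι κ R) (b : ι → R) : Convex R {x | A *ᵥ x ≤ b} :=
  (convex_Iic b).linear_preimage A.mulVecLin

theorem joinedIn_compl_zero_of_apply_eq {E : Type*} [AddCommGroup E] [Module ℝ E]
    [TopologicalSpace E] [ContinuousAdd E] [ContinuousSMul ℝ E] (f : E →ₗ[ℝ] ℝ) {v w : E}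
    (hv : f v ≠ 0) (hvw : f v = f w) : JoinedIn {0}ᶜ v w := by
  have hconvex : Convex ℝ {u | f u = f v} := convex_hyperplane f.isLinear (f v)
  refine (JoinedIn.of_segment_subset (hconvex.segment_subset rfl hvw.symm)).mono ?_
  intro u hu hu0
  apply hv
  rw [← hu, hu0, map_zero]

end Convexity

section Charpoly

theorem roots_charpoly_diagonal {ι R : Type*} [Fintype ι] [DecidableEq ι] [CommRing R] [IsDomain R]
    (d : ι → R) : (diagonal d).charpoly.roots = Finset.univ.val.map d := by
  have hne : ∏ i, (Polynomial.X - Polynomial.C (d i)) ≠ 0 :=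
    Finset.prod_ne_zero_iff.2 fun i _ => Polynomial.X_sub_C_ne_zero (d i)
  rw [charpoly_diagonal, Polynomial.roots_prod _ _ hne]
  simp

theorem eq_of_antitone_of_charpoly_diagonal_eq {n : ℕ} {R : Type*} [CommRing R] [IsDomain R]
    [LinearOrder R] {d e : Fin n → R} (hd : Antitone d) (he : Antitone e)
    (h : (diagonal d).charpoly = (diagonal e).charpoly) : d = e := by
  have hperm : (List.ofFn d).Perm (List.ofFn e) := by
    rw [← Multiset.coe_eq_coe, ← Fin.univ_val_map, ← Fin.univ_val_map,
      ← roots_charpoly_diagonal, ← roots_charpoly_diagonal, h]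
  exact List.ofFn_injective (hperm.eq_of_sortedGE hd.sortedGE_ofFn he.sortedGE_ofFn)

theorem charpoly_conjStarAlgAut {ι R : Type*} [Fintype ι] [DecidableEq ι] [CommRing R] [StarRing R]
    (U : unitaryGroup ι R) (M : Matrix ι ι R) :
    (conjStarAlgAut R _ U M).charpoly = M.charpoly := by
  rw [conjStarAlgAut_apply, charpoly_mul_comm, ← mul_assoc, coe_star_mul_self, one_mul]

theorem exists_conjStarAlgAut_eq_of_charpoly_eq {ι 𝕜 : Type*} [Fintype ι] [DecidableEq ι]
    [RCLike 𝕜] {M N : Matrix ι ι 𝕜} (hM : M.IsHermitian) (hN : N.IsHermitian)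
    (h : M.charpoly = N.charpoly) : ∃ U : unitaryGroup ι 𝕜, conjStarAlgAut 𝕜 _ U M = N := by
  refine ⟨hN.eigenvectorUnitary * star hM.eigenvectorUnitary, ?_⟩
  rw [conjStarAlgAut_mul_apply, hM.conjStarAlgAut_star_eigenvectorUnitary,
    (hM.eigenvalues_eq_eigenvalues_iff hN).2 h, ← hN.spectral_theorem]

end Charpoly

section Eigs

variable {n : ℕ} {X : Matrix (Fin n) (Fin n) ℝ}

theorem eigs_antitone (X : Matrix (Fin n) (Fin n) ℝ) : Antitone (eigs X) := by
  unfold eigs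
  split
  case isTrue hX => exact fun _ _ hij => Tuple.monotone_sort hX.eigenvalues (Fin.rev_le_rev.2 hij)
  case isFalse => exact antitone_const

theorem charpoly_diagonal_eigs (hX : X.IsHermitian) :
    (diagonal (eigs X)).charpoly = X.charpoly := by
  rw [hX.charpoly_eq, charpoly_diagonal, eigs, dif_pos hX]
  exact Equiv.prod_comp (Fin.revPerm.trans (Tuple.sort hX.eigenvalues))
    fun i => Polynomial.X - Polynomial.C (hX.eigenvalues i)

theorem eigs_eq_of_charpoly_eq (hX : X.IsHermitian) {d : Fin n → ℝ} (hd : Antitone d)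
    (h : X.charpoly = (diagonal d).charpoly) : eigs X = d :=
  eq_of_antitone_of_charpoly_diagonal_eq (eigs_antitone X) hd ((charpoly_diagonal_eigs hX).trans h)

theorem exists_conjStarAlgAut_diagonal_eigs_eq (hX : X.IsHermitian) :
    ∃ Q : unitaryGroup (Fin n) ℝ, conjStarAlgAut ℝ _ Q (diagonal (eigs X)) = X :=
  exists_conjStarAlgAut_eq_of_charpoly_eq (isHermitian_diagonal _) hX (charpoly_diagonal_eigs hX)

end Eigs

section JoinedToDiagonal

theorem isDiag_mul {ι R : Type*} [Fintype ι] [NonUnitalNonAssocSemiring R] {A B : Matrix ι ι R}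
    (hA : A.IsDiag) (hB : B.IsDiag) : (A * B).IsDiag := by
  classical
  rw [← hA.diagonal_diag, ← hB.diagonal_diag, diagonal_mul_diagonal]
  exact isDiag_diagonal _

theorem conjStarAlgAut_diagonal_of_isDiag {ι R : Type*} [Fintype ι] [DecidableEq ι] [CommRing R]
    [StarRing R] {D : unitaryGroup ι R} (hD : (D : Matrix ι ι R).IsDiag) (d : ι → R) :
    conjStarAlgAut R _ D (diagonal d) = diagonal d := by
  have hcomm : (D : Matrix ι ι R) * diagonal d = diagonal d * D := by
    rw [← hD.diagonal_diag, diagonal_mul_diagonal, diagonal_mul_diagonal]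
    simp only [mul_comm]
  rw [conjStarAlgAut_apply, hcomm, mul_assoc, mem_unitaryGroup_iff.1 D.2, mul_one]

/-- The subgroup of unitary matrices that are joined, by a path of unitary matrices, to a diagonal
one. -/
def joinedToDiagonal (ι R : Type*) [Fintype ι] [DecidableEq ι] [CommRing R] [StarRing R]
    [TopologicalSpace R] [IsTopologicalSemiring R] [ContinuousStar R] :
    Subgroup (unitaryGroup ι R) where
  carrier := {Q | ∃ D : unitaryGroup ι R, (D : Matrix ι ι R).IsDiag ∧ Joined Q D}
  one_mem' := ⟨1, isDiag_one, .refl 1⟩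
  mul_mem' := fun ⟨D, hD, hPD⟩ ⟨E, hE, hQE⟩ => ⟨D * E, isDiag_mul hD hE, hPD.mul hQE⟩
  inv_mem' := fun ⟨D, hD, hQD⟩ => ⟨D⁻¹, hD.conjTranspose, hQD.inv⟩

end JoinedToDiagonal

section Reflection

variable {ι : Type*} [Fintype ι] [DecidableEq ι]

/-- The identification of unitary matrices with the linear isometries of Euclidean space. -/
noncomputable def unitaryGroupEquivLinearIsometryEquiv (ι 𝕜 : Type*) [Fintype ι] [DecidableEq ι]
    [RCLike 𝕜] : unitaryGroup ι 𝕜 ≃* (EuclideanSpace 𝕜 ι ≃ₗᵢ[𝕜] EuclideanSpace 𝕜 ι) :=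
  (mapEquiv ⟨(toEuclideanCLM (n := ι) (𝕜 := 𝕜) : _ ≃* _), map_star _⟩).toMulEquiv.trans
    linearIsometryEquiv

/-- The Householder matrix of `v`: the orthogonal matrix of the reflection in the hyperplane `vᗮ`,
which is the identity for `v = 0`. -/
noncomputable def reflectionMatrix (v : EuclideanSpace ℝ ι) : unitaryGroup ι ℝ :=
  (unitaryGroupEquivLinearIsometryEquiv ι ℝ).symm (ℝ ∙ v)ᗮ.reflection

theorem coe_reflectionMatrix (v : EuclideanSpace ℝ ι) :
    (reflectionMatrix v : Matrix ι ι ℝ) = 1 - (2 / ‖v‖ ^ 2) • vecMulVec v v := by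
  apply EquivLike.injective (toEuclideanCLM (n := ι) (𝕜 := ℝ))
  ext x i
  have hx : toEuclideanCLM (𝕜 := ℝ) (reflectionMatrix v : Matrix ι ι ℝ) x =
      (ℝ ∙ v)ᗮ.reflection x :=
    congrArg (· x) ((unitaryGroupEquivLinearIsometryEquiv ι ℝ).apply_symm_apply _)
  have hinner : inner ℝ v x = v.ofLp ⬝ᵥ x.ofLp := by
    rw [EuclideanSpace.inner_eq_star_dotProduct, dotProduct_comm, star_trivial]
  rw [hx, Submodule.reflection_orthogonal_apply, Submodule.reflection_singleton_apply]
  simp only [hinner, Real.ringHom_apply, neg_sub, PiLp.sub_apply, PiLp.smul_apply, smul_eq_mul,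
    nsmul_eq_mul, Nat.cast_ofNat, map_sub, map_one, map_smul, _root_.sub_apply, one_apply_eq_self,
    _root_.smul_apply, ofLp_toEuclideanCLM, vecMulVec_mulVec, Pi.smul_apply,
    MulOpposite.smul_eq_mul_unop, MulOpposite.unop_op]
  ring

theorem continuousOn_reflectionMatrix :
    ContinuousOn (reflectionMatrix : EuclideanSpace ℝ ι → unitaryGroup ι ℝ) {0}ᶜ := by
  rw [Topology.IsInducing.subtypeVal.continuousOn_iff]
  have hcoeff : ContinuousOn (fun v : EuclideanSpace ℝ ι => 2 / ‖v‖ ^ 2) {0}ᶜ :=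
    continuousOn_const.div (by fun_prop) fun v hv => pow_ne_zero 2 (norm_ne_zero_iff.2 hv)
  have hvec : Continuous fun v : EuclideanSpace ℝ ι => vecMulVec v v :=
    Continuous.matrix_vecMulVec (by fun_prop) (by fun_prop)
  exact (continuousOn_const.sub (hcoeff.smul hvec.continuousOn)).congr
    fun v _ => coe_reflectionMatrix v

theorem isDiag_reflectionMatrix_single (i : ι) (c : ℝ) :
    (reflectionMatrix (EuclideanSpace.single i c) : Matrix ι ι ℝ).IsDiag := by
  rw [coe_reflectionMatrix]
  refine isDiag_one.sub (IsDiag.smul _ fun j k hjk => ?_)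
  by_cases hj : j = i
  · simp [vecMulVec_apply, ← hj, hjk.symm]
  · simp [vecMulVec_apply, hj]

theorem reflectionMatrix_mem_joinedToDiagonal (v : EuclideanSpace ℝ ι) :
    reflectionMatrix v ∈ joinedToDiagonal ι ℝ := by
  obtain rfl | hv := eq_or_ne v 0
  · have hone : reflectionMatrix (0 : EuclideanSpace ℝ ι) = 1 :=
      Subtype.ext (by simp [coe_reflectionMatrix])
    exact hone ▸ one_mem _
  · obtain ⟨i, hi⟩ : ∃ i, v i ≠ 0 := by
      by_contra! h
      exact hv (PiLp.ext h)
    have hpath : JoinedIn {0}ᶜ v (EuclideanSpace.single i (v i)) :=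
      joinedIn_compl_zero_of_apply_eq (EuclideanSpace.proj i : _ →L[ℝ] ℝ).toLinearMap hi (by simp)
    exact ⟨_, isDiag_reflectionMatrix_single i (v i),
      (hpath.map_continuousOn continuousOn_reflectionMatrix).joined⟩

theorem mem_joinedToDiagonal_real (Q : unitaryGroup ι ℝ) : Q ∈ joinedToDiagonal ι ℝ := by
  have hreflections : Subgroup.closure
      (Set.range fun v : EuclideanSpace ℝ ι => (ℝ ∙ v)ᗮ.reflection) ≤
      (joinedToDiagonal ι ℝ).comap (unitaryGroupEquivLinearIsometryEquiv ι ℝ).symm.toMonoidHom :=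
    (Subgroup.closure_le _).2 (Set.range_subset_iff.2 reflectionMatrix_mem_joinedToDiagonal)
  rw [LinearIsometryEquiv.reflections_generate] at hreflections
  simpa using hreflections (Subgroup.mem_top (unitaryGroupEquivLinearIsometryEquiv ι ℝ Q))

end Reflection

section SpectralSet

variable {n : ℕ} {C : Set (Fin n → ℝ)}

/-- The symmetric matrices whose vector of descending eigenvalues lies in `C`; the set `SLambda A b`
is the case of a polyhedron `C`. -/
def spectralSet (C : Set (Fin n → ℝ)) : Set (Matrix (Fin n) (Fin n) ℝ) :=
  {X | X.IsHermitian ∧ eigs X ∈ C}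

theorem diagonal_mem_spectralSet {d : Fin n → ℝ} (hd : Antitone d) (hdC : d ∈ C) :
    diagonal d ∈ spectralSet C :=
  ⟨isHermitian_diagonal d, (eigs_eq_of_charpoly_eq (isHermitian_diagonal d) hd rfl).symm ▸ hdC⟩

theorem conjStarAlgAut_diagonal_mem_spectralSet (Q : unitaryGroup (Fin n) ℝ) {d : Fin n → ℝ}
    (hd : Antitone d) (hdC : d ∈ C) : conjStarAlgAut ℝ _ Q (diagonal d) ∈ spectralSet C := by
  have hQ : (conjStarAlgAut ℝ _ Q (diagonal d)).IsHermitian :=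
    (isHermitian_diagonal d).isSelfAdjoint.map (conjStarAlgAut ℝ _ Q)
  exact ⟨hQ, (eigs_eq_of_charpoly_eq hQ hd (charpoly_conjStarAlgAut Q _)).symm ▸ hdC⟩

theorem joinedIn_spectralSet_diagonal_eigs {X : Matrix (Fin n) (Fin n) ℝ}
    (hX : X ∈ spectralSet C) : JoinedIn (spectralSet C) X (diagonal (eigs X)) := by
  obtain ⟨Q, hQX⟩ := exists_conjStarAlgAut_diagonal_eigs_eq hX.1
  obtain ⟨D, hD, hQD⟩ := mem_joinedToDiagonal_real Q
  have hcont : Continuous fun P : unitaryGroup (Fin n) ℝ =>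
      conjStarAlgAut ℝ _ P (diagonal (eigs X)) := by
    simp only [conjStarAlgAut_apply]
    fun_prop
  have hpath := (joinedIn_univ.2 hQD).map hcont
  rw [hQX, conjStarAlgAut_diagonal_of_isDiag hD] at hpath
  refine hpath.mono (Set.image_subset_iff.2 fun P _ => ?_)
  exact conjStarAlgAut_diagonal_mem_spectralSet P (eigs_antitone X) hX.2

theorem joinedIn_spectralSet_diagonal (hC : Convex ℝ C) {d e : Fin n → ℝ}
    (hd : Antitone d) (hdC : d ∈ C) (he : Antitone e) (heC : e ∈ C) :
    JoinedIn (spectralSet C) (diagonal d) (diagonal e) := by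
  have hsegment : JoinedIn (C ∩ {f | Antitone f}) d e :=
    .of_segment_subset ((hC.inter convex_setOf_antitone).segment_subset ⟨hdC, hd⟩ ⟨heC, he⟩)
  refine (hsegment.map continuous_id.matrix_diagonal).mono (Set.image_subset_iff.2 ?_)
  exact fun f ⟨hfC, hf⟩ => diagonal_mem_spectralSet hf hfC

theorem statement1_general {n : ℕ} {C : Set (Fin n → ℝ)} (hC : Convex ℝ C) :
    (∀ X₁ ∈ spectralSet C, ∀ X₂ ∈ spectralSet C, JoinedIn (spectralSet C) X₁ X₂) ∧
    IsPreconnected (spectralSet C) := by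
  have hjoined : ∀ X₁ ∈ spectralSet C, ∀ X₂ ∈ spectralSet C, JoinedIn (spectralSet C) X₁ X₂ :=
    fun X₁ h₁ X₂ h₂ => (joinedIn_spectralSet_diagonal_eigs h₁).trans <|
      (joinedIn_spectralSet_diagonal hC (eigs_antitone X₁) h₁.2 (eigs_antitone X₂) h₂.2).trans
        (joinedIn_spectralSet_diagonal_eigs h₂).symm
  refine ⟨hjoined, ?_⟩
  obtain hempty | hne := (spectralSet C).eq_empty_or_nonempty
  · exact hempty ▸ isPreconnected_empty
  · exact (isPathConnected_iff.2 ⟨hne, hjoined⟩).isConnected.isPreconnected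

end SpectralSet

/-- `S_λ(A,b)` is path-connected: any two of its points are joined by a continuous path
staying in the set; in particular, `S_λ(A,b)` is a connected subset of `S^{n×n}`. -/
theorem statement1 {m n : ℕ} (A : Matrix (Fin m) (Fin n) ℝ) (b : Fin m → ℝ) :
    (∀ X₁ ∈ SLambda A b, ∀ X₂ ∈ SLambda A b, JoinedIn (SLambda A b) X₁ X₂) ∧
    IsPreconnected (SLambda A b) := by
  exact statement1_general (convex_setOf_mulVec_le A b)
end

section
/- Let F : S^{n×n} → ℝ be continuously (Fréchet) differentiable with gradient ∇F(X) ∈ S^{n×n}, let a₁,…,a_p ∈ ℝⁿ and b ∈ ℝᵖ, and define gᵢ(X) := aᵢᵀ λ(X) − bᵢ for i = 1,…,p. Let X* be a local minimizer of F over {X ∈ S^{n×n} : gᵢ(X) ≤ 0, i = 1,…,p} such that the n eigenvalues of X* are pairwise distinct, and write the eigendecomposition X* = V* Diag(λ(X*)) (V*)ᵀ with V* orthogonal and columns ordered to match the descending eigenvalues. If the vectors {aᵢ : i ∈ I(X*)} are linearly independent, where I(X*) := {i : gᵢ(X*) = 0}, then there exist multipliers μ ∈ ℝᵖ with μᵢ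 ≥ 0 and μᵢ gᵢ(X*) = 0 for all i, such that ∇F(X*) + Σ_{i=1}^{p} μᵢ V* Diag(aᵢ) (V*)ᵀ = 0. -/
open Matrix

attribute [local instance] Matrix.frobeniusNormedAddCommGroup Matrix.frobeniusNormedSpace

/-!
The feasible set is invariant under conjugation by orthogonal matrices, so the derivative of `F`
vanishes along the orbit of `X*`, i.e. `⟪∇F(X*), K X* - X* K⟫ = 0` for every skew `K`. Taking `K` to
be the commutator of `X*` and `∇F(X*)` shows that the two commute, and since the eigenvalues of `X*`
are distinct, `∇F(X*) = V Diag(c) Vᵀ` for some vector `c`.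

Moving along `V Diag(λ(X*) + t d) Vᵀ` keeps the eigenvalues sorted for small `t`, so there the
constraints are the affine ones `aᵢᵀ (λ(X*) + t d) ≤ bᵢ`. Minimality gives `cᵀ d ≥ 0` whenever
`aᵢᵀ d ≤ 0` for all active `i`, and Farkas' lemma provides the multipliers.
-/

open Filter Topology

section Farkas

variable {R E ι : Type*} [Field R] [AddCommGroup E] [Module R E]

theorem smul_add_sum_smul_eq_of_sum_smul_comp_eq {s : Finset ι} {f : ι → Module.Dual R E}
    {φ g : Module.Dual R E} {z : E} {μ : ι → R}
    (h : ∑ i ∈ s, μ i • (f i ∘ₗ (LinearMap.id - φ.smulRight z)) =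
      g ∘ₗ (LinearMap.id - φ.smulRight z)) :
    (g z - ∑ i ∈ s, μ i * f i z) • φ + ∑ i ∈ s, μ i • f i = g := by
  ext x
  have hx := LinearMap.congr_fun h x
  simp only [LinearMap.sum_apply, LinearMap.smul_apply, LinearMap.comp_apply, LinearMap.sub_apply,
    LinearMap.id_apply, LinearMap.smulRight_apply, map_sub, map_smul, smul_eq_mul, mul_sub,
    Finset.sum_sub_distrib, mul_left_comm _ (φ x), ← Finset.mul_sum] at hx
  simp only [LinearMap.add_apply, LinearMap.sum_apply, LinearMap.smul_apply, smul_eq_mul]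
  linear_combination hx

variable [LinearOrder R] [IsStrictOrderedRing R]

theorem exists_normalized_of_not_forall_nonpos {s : Finset ι} {f : ι → Module.Dual R E}
    {φ g : Module.Dual R E} (h : ∀ x, φ x ≤ 0 → (∀ i ∈ s, f i x ≤ 0) → g x ≤ 0)
    (hs : ¬∀ x, (∀ i ∈ s, f i x ≤ 0) → g x ≤ 0) :
    ∃ z, φ z = 1 ∧ 0 < g z ∧ ∀ i ∈ s, f i z ≤ 0 := by
  push Not at hs
  obtain ⟨y, hfy, hgy⟩ := hs
  have hφy : 0 < φ y := by
    by_contra! hφy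
    exact hgy.not_ge (h y hφy hfy)
  refine ⟨(φ y)⁻¹ • y, by simp [hφy.ne'], ?_, fun i hi => ?_⟩
  · simpa using mul_pos (inv_pos.2 hφy) hgy
  · simpa using mul_nonpos_of_nonneg_of_nonpos (inv_nonneg.2 hφy.le) (hfy i hi)

theorem exists_nonneg_sum_smul_eq_of_forall_nonpos (s : Finset ι) (f : ι → Module.Dual R E)
    (g : Module.Dual R E) (h : ∀ x, (∀ i ∈ s, f i x ≤ 0) → g x ≤ 0) :
    ∃ μ : ι → R, (∀ i, 0 ≤ μ i) ∧ ∑ i ∈ s, μ i • f i = g := by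
  classical
  induction s using Finset.induction_on generalizing f g with
  | empty =>
    have hg (x : E) : g x ≤ 0 := h x (by simp)
    refine ⟨0, fun _ => le_rfl, LinearMap.ext fun x => ?_⟩
    have hneg : -g x ≤ 0 := map_neg g x ▸ hg (-x)
    simpa using le_antisymm (neg_nonpos.1 hneg) (hg x)
  | insert j s hj ih =>
    suffices ∃ (μ : ι → R) (c : R), (∀ i, 0 ≤ μ i) ∧ 0 ≤ c ∧ c • f j + ∑ i ∈ s, μ i • f i = g by
      obtain ⟨μ, c, hμ, hc, rfl⟩ := this
      refine ⟨Function.update μ j c, fun i => ?_, ?_⟩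
      · rcases eq_or_ne i j with rfl | hij <;> simp [*]
      · simp +contextual [Finset.sum_insert hj, ne_of_mem_of_not_mem _ hj]
    by_cases hs : ∀ x, (∀ i ∈ s, f i x ≤ 0) → g x ≤ 0
    · obtain ⟨μ, hμ, hg⟩ := ih f g hs
      exact ⟨μ, 0, hμ, le_rfl, by simpa using hg⟩
    · obtain ⟨z, hjz, hgz, hfz⟩ : ∃ z, f j z = 1 ∧ 0 < g z ∧ ∀ i ∈ s, f i z ≤ 0 :=
        exists_normalized_of_not_forall_nonpos
          (fun x hjx hx => h x ((Finset.forall_mem_insert ..).2 ⟨hjx, hx⟩)) hs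
      -- The projection onto `ker (f j)` along `z` eliminates the constraint `f j`.
      let P : E →ₗ[R] E := LinearMap.id - (f j).smulRight z
      obtain ⟨μ, hμ, hsum⟩ := ih (fun i => f i ∘ₗ P) (g ∘ₗ P) fun x hx =>
        h (P x) ((Finset.forall_mem_insert ..).2 ⟨by simp [P, hjz], hx⟩)
      refine ⟨μ, g z - ∑ i ∈ s, μ i * f i z, hμ, ?_, smul_add_sum_smul_eq_of_sum_smul_comp_eq hsum⟩
      have hnonpos : ∑ i ∈ s, μ i * f i z ≤ 0 :=
        Finset.sum_nonpos fun i hi => mul_nonpos_of_nonneg_of_nonpos (hμ i) (hfz i hi)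
      linarith

theorem exists_nonneg_add_sum_smul_eq_zero_of_forall_dotProduct_nonneg [Fintype ι]
    {m : Type*} [Fintype m] (p : ι → Prop) (a : ι → m → R) (c : m → R)
    (h : ∀ d, (∀ i, p i → a i ⬝ᵥ d ≤ 0) → 0 ≤ c ⬝ᵥ d) :
    ∃ μ : ι → R, (∀ i, 0 ≤ μ i) ∧ (∀ i, ¬p i → μ i = 0) ∧ c + ∑ i, μ i • a i = 0 := by
  classical
  obtain ⟨μ, hμ, hsum⟩ := exists_nonneg_sum_smul_eq_of_forall_nonpos {i | p i}
    (fun i => dotProductEquiv R m (a i)) (-dotProductEquiv R m c) fun d hd => by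
      simpa using h d (by simpa using hd)
  refine ⟨fun i => if p i then μ i else 0, fun i => ?_, fun i hi => if_neg hi, ?_⟩
  · dsimp only
    split_ifs
    exacts [hμ i, le_rfl]
  · apply (dotProductEquiv R m).injective
    simp only [map_add, map_sum, map_smul, map_zero, ite_smul, zero_smul, ← Finset.sum_filter]
    rw [hsum, add_neg_cancel]

end Farkas

section Eigenvalues

theorem eq_of_antitone_of_map_univ_eq {α : Type*} [PartialOrder α] {n : ℕ} {f g : Fin n → α}
    (hf : Antitone f) (hg : Antitone g)
    (h : Finset.univ.val.map f = Finset.univ.val.map g) : f = g := by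
  rw [Fin.univ_val_map, Fin.univ_val_map, Multiset.coe_eq_coe] at h
  exact List.ofFn_injective
    (h.eq_of_pairwise' hf.sortedGE_ofFn.pairwise hg.sortedGE_ofFn.pairwise)

theorem isHermitian_mul_mul_transpose {m k R : Type*} [Fintype m] [NonUnitalSemiring R] [StarRing R]
    [TrivialStar R] {X : Matrix m m R} (hX : X.IsHermitian) (U : Matrix k m R) :
    (U * X * Uᵀ).IsHermitian := by
  simpa using isHermitian_mul_mul_conjTranspose U hX

variable {n : ℕ} {X : Matrix (Fin n) (Fin n) ℝ}

theorem antitone_eigs (hX : X.IsHermitian) : Antitone (eigs X) := fun i j hij => by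
  simpa only [eigs, dif_pos hX] using Tuple.monotone_sort hX.eigenvalues (Fin.rev_le_rev.2 hij)

theorem map_univ_eigs (hX : X.IsHermitian) :
    Finset.univ.val.map (eigs X) = X.charpoly.roots := by
  have heigs : eigs X = hX.eigenvalues ∘ (Fin.revPerm.trans (Tuple.sort hX.eigenvalues)) := by
    ext i
    simp only [eigs, dif_pos hX]
    rfl
  rw [heigs, ← Multiset.map_map, Multiset.map_univ_val_equiv, hX.roots_charpoly_eq_eigenvalues]
  rfl

theorem eigs_eq_of_charpoly_eq_s4 {Y : Matrix (Fin n) (Fin n) ℝ} (hX : X.IsHermitian)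
    (hY : Y.IsHermitian) (h : X.charpoly = Y.charpoly) : eigs X = eigs Y :=
  eq_of_antitone_of_map_univ_eq (antitone_eigs hX) (antitone_eigs hY) <| by
    rw [map_univ_eigs hX, map_univ_eigs hY, h]

theorem eigs_diagonal {d : Fin n → ℝ} (hd : Antitone d) : eigs (diagonal d) = d :=
  eq_of_antitone_of_map_univ_eq (antitone_eigs (isHermitian_diagonal d)) hd <| by
    rw [map_univ_eigs (isHermitian_diagonal d), charpoly_diagonal]
    simpa [Finset.prod, Multiset.map_map, Function.comp_def] using
      Polynomial.roots_multiset_prod_X_sub_C (Finset.univ.val.map d)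

theorem eigs_orthogonal_conj (hX : X.IsHermitian) {U : Matrix (Fin n) (Fin n) ℝ}
    (hU : U ∈ orthogonalGroup (Fin n) ℝ) : eigs (U * X * Uᵀ) = eigs X := by
  refine eigs_eq_of_charpoly_eq_s4 (isHermitian_mul_mul_transpose hX U) hX ?_
  rw [charpoly_mul_comm, ← Matrix.mul_assoc, (mem_orthogonalGroup_iff' _ _).1 hU, Matrix.one_mul]

end Eigenvalues

theorem isOpen_setOf_strictAnti {ι α : Type*} [Finite ι] [Preorder ι] [LinearOrder α]
    [TopologicalSpace α] [OrderClosedTopology α] : IsOpen {f : ι → α | StrictAnti f} := by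
  simp only [StrictAnti, Set.ofPred_forall]
  exact isOpen_iInter_of_finite fun i => isOpen_iInter_of_finite fun j =>
    isOpen_iInter_of_finite fun _ => isOpen_lt (continuous_apply j) (continuous_apply i)

theorem eventually_nhdsGT_add_mul_le {x v b : ℝ} (hx : x ≤ b) (hv : x = b → v ≤ 0) :
    ∀ᶠ t in 𝓝[>] (0 : ℝ), x + t * v ≤ b := by
  rcases hx.eq_or_lt with heq | hlt
  · filter_upwards [self_mem_nhdsWithin] with t (ht : 0 < t)
    linarith [mul_nonpos_of_nonneg_of_nonpos ht.le (hv heq)]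
  · have hcont : ContinuousAt (fun t : ℝ => x + t * v) 0 := by fun_prop
    have hlim := hcont.eventually_lt_const (u := b) (by simpa using hlt)
    exact nhdsWithin_le_nhds (hlim.mono fun t ht => ht.le)

section TangentCone

theorem mem_posTangentConeAt_of_hasDerivWithinAt {E : Type*} [NormedAddCommGroup E]
    [NormedSpace ℝ E] {s : Set E} {γ : ℝ → E} {v : E}
    (hγ : HasDerivWithinAt γ v (Set.Ioi 0) 0) (hs : ∀ᶠ t in 𝓝[>] 0, γ t ∈ s) :
    v ∈ posTangentConeAt s (γ 0) := by
  refine mem_tangentConeAt_of_seq (𝓝[>] (0 : ℝ)) (fun t => t⁻¹.toNNReal) (fun t => γ t - γ 0)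
    ?_ (by simpa using hs) ?_
  · simpa using hγ.continuousWithinAt.tendsto.sub_const (γ 0)
  · refine ((hasDerivWithinAt_iff_tendsto_slope' (by simp)).1 hγ).congr' ?_
    filter_upwards [self_mem_nhdsWithin] with t (ht : 0 < t)
    simp [slope, NNReal.smul_def, ht.le]

theorem hasDerivAt_exp_smul_conj_zero {𝔸 : Type*} [NormedRing 𝔸] [NormedAlgebra ℝ 𝔸]
    [CompleteSpace 𝔸] (x k : 𝔸) :
    HasDerivAt (fun t : ℝ => NormedSpace.exp (t • k) * x * NormedSpace.exp (t • -k))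
      (k * x - x * k) 0 := by
  have h := ((hasDerivAt_exp_smul_const (𝕂 := ℝ) k 0).mul_const x).mul
    (hasDerivAt_exp_smul_const (𝕂 := ℝ) (-k) 0)
  simpa [sub_eq_add_neg, Pi.mul_def] using h

theorem commutator_mem_posTangentConeAt {𝔸 : Type*} [NormedRing 𝔸] [NormedAlgebra ℝ 𝔸]
    [CompleteSpace 𝔸] [StarRing 𝔸] [ContinuousStar 𝔸] [StarModule ℝ 𝔸] {s : Set 𝔸} {x k : 𝔸}
    (hs : ∀ u ∈ unitary 𝔸, u * x * star u ∈ s) (hk : k ∈ skewAdjoint 𝔸) :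
    k * x - x * k ∈ posTangentConeAt s x := by
  let := NormedAlgebra.restrictScalars ℚ ℝ 𝔸
  have hγ := (hasDerivAt_exp_smul_conj_zero x k).hasDerivWithinAt (s := Set.Ioi 0)
  have hmem (t : ℝ) : NormedSpace.exp (t • k) * x * NormedSpace.exp (t • -k) ∈ s := by
    have hstar : star (NormedSpace.exp (t • k)) = NormedSpace.exp (t • -k) := by
      rw [NormedSpace.star_exp, star_smul, skewAdjoint.mem_iff.1 hk, star_trivial]
    rw [← hstar]
    exact hs _ (NormedSpace.exp_mem_unitary_of_mem_skewAdjoint (skewAdjoint.smul_mem t hk))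
  simpa using mem_posTangentConeAt_of_hasDerivWithinAt hγ (.of_forall hmem)

end TangentCone

section DiagonalConjugates

theorem commute_of_forall_trace_commutator_eq_zero {m R : Type*} [Fintype m] [CommRing R]
    [PartialOrder R] [StarRing R] [StarOrderedRing R] [NoZeroDivisors R] {A X : Matrix m m R}
    (hA : A.IsHermitian) (hX : X.IsHermitian)
    (h : ∀ K ∈ skewAdjoint (Matrix m m R), (A * (K * X - X * K)).trace = 0) : Commute A X := by
  set K := X * A - A * X with hK
  have hskew : Kᴴ = -K := by simp [hK, hA.eq, hX.eq]
  have hnorm : (Kᴴ * K).trace = 0 := by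
    have hcycle : (A * (K * X - X * K)).trace = (K * K).trace :=
      calc (A * (K * X - X * K)).trace
          = (A * K * X).trace - (A * X * K).trace := by
            simp only [Matrix.mul_sub, trace_sub, Matrix.mul_assoc]
        _ = (X * A * K).trace - (A * X * K).trace := by rw [trace_mul_cycle A K X]
        _ = (K * K).trace := by rw [← trace_sub, ← Matrix.sub_mul]
    rw [hskew, Matrix.neg_mul, trace_neg, ← hcycle, h K hskew, neg_zero]
  exact (sub_eq_zero.1 (trace_conjTranspose_mul_self_eq_zero_iff.1 hnorm)).symm

theorem isDiag_of_commute_diagonal {m R : Type*} [Fintype m] [DecidableEq m] [CommRing R]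
    [NoZeroDivisors R] {M : Matrix m m R} {d : m → R} (hd : Function.Injective d)
    (h : Commute M (diagonal d)) : M.IsDiag := by
  intro i j hij
  have hentry : M i j * d j = d i * M i j := by
    simpa only [mul_diagonal, diagonal_mul] using congr_fun₂ h.eq i j
  have hprod : M i j * (d j - d i) = 0 := by linear_combination hentry
  exact (mul_eq_zero.1 hprod).resolve_right (sub_ne_zero.2 (hd.ne hij.symm))

theorem sum_mul_eq_trace_transpose_mul {m k R : Type*} [Fintype m] [Fintype k]
    [NonUnitalNonAssocSemiring R] (A B : Matrix m k R) :
    ∑ i, ∑ j, A i j * B i j = (Aᵀ * B).trace := by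
  rw [← transpose_transpose B, trace_transpose_mul]
  rfl

variable {m R : Type*} [Fintype m] [DecidableEq m] [CommRing R]

theorem exists_eq_conj_diagonal_of_commute [NoZeroDivisors R] {G V : Matrix m m R} {d : m → R}
    (hV : V ∈ orthogonalGroup m R) (hd : Function.Injective d)
    (h : Commute G (V * diagonal d * Vᵀ)) : ∃ c, G = V * diagonal c * Vᵀ := by
  have hVV : Vᵀ * V = 1 := (mem_orthogonalGroup_iff' m R).1 hV
  have hVV' : V * Vᵀ = 1 := (mem_orthogonalGroup_iff m R).1 hV
  have hcomm : Commute (Vᵀ * G * V) (diagonal d) := by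
    calc Vᵀ * G * V * diagonal d
        = Vᵀ * (G * (V * diagonal d * Vᵀ)) * V := by
          simp only [Matrix.mul_assoc, hVV, Matrix.mul_one]
      _ = Vᵀ * (V * diagonal d * Vᵀ * G) * V := by rw [h.eq]
      _ = diagonal d * (Vᵀ * G * V) := by
          simp only [← Matrix.mul_assoc, hVV, Matrix.one_mul]
  refine ⟨(Vᵀ * G * V).diag, ?_⟩
  rw [(isDiag_of_commute_diagonal hd hcomm).diagonal_diag]
  calc G = V * Vᵀ * G * (V * Vᵀ) := by rw [hVV', Matrix.one_mul, Matrix.mul_one]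
    _ = V * (Vᵀ * G * V) * Vᵀ := by simp only [Matrix.mul_assoc]

theorem conj_diagonal_add_sum_smul {ι : Type*} [Fintype ι] (V : Matrix m m R) (c : m → R)
    (μ : ι → R) (a : ι → m → R) :
    V * diagonal (c + ∑ i, μ i • a i) * Vᵀ =
      V * diagonal c * Vᵀ + ∑ i, μ i • (V * diagonal (a i) * Vᵀ) := by
  have hlinear (d : m → R) : diagonal d = diagonalLinearMap m R R d := rfl
  simp only [hlinear, map_add, map_sum, map_smul, Matrix.mul_add, Matrix.add_mul, Matrix.mul_sum,
    Matrix.sum_mul, Matrix.mul_smul, Matrix.smul_mul]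

theorem trace_transpose_conj_diagonal_mul {V : Matrix m m R} (hV : V ∈ orthogonalGroup m R)
    (c d : m → R) :
    ((V * diagonal c * Vᵀ)ᵀ * (V * diagonal d * Vᵀ)).trace = c ⬝ᵥ d := by
  have hVV : Vᵀ * V = 1 := (mem_orthogonalGroup_iff' m R).1 hV
  calc ((V * diagonal c * Vᵀ)ᵀ * (V * diagonal d * Vᵀ)).trace
      = (V * (diagonal c * (Vᵀ * V) * diagonal d) * Vᵀ).trace := by
        simp only [transpose_mul, transpose_transpose, diagonal_transpose, Matrix.mul_assoc]
    _ = (Vᵀ * V * (diagonal c * diagonal d)).trace := by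
        rw [hVV, Matrix.mul_one, trace_mul_cycle, hVV]
    _ = c ⬝ᵥ d := by
        rw [hVV, Matrix.one_mul, diagonal_mul_diagonal, trace_diagonal, dotProduct]

end DiagonalConjugates

section OrthogonalInvariance

attribute [local instance] Matrix.frobeniusNormedRing Matrix.frobeniusNormedAlgebra

theorem commute_gradient_of_isLocalMinOn {m : Type*} [Fintype m] [DecidableEq m]
    {F : Matrix m m ℝ → ℝ} {F' : Matrix m m ℝ →L[ℝ] ℝ} {s : Set (Matrix m m ℝ)}
    {G X : Matrix m m ℝ} (hs : ∀ U ∈ orthogonalGroup m ℝ, U * X * Uᵀ ∈ s)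
    (hmin : IsLocalMinOn F s X) (hF : HasFDerivWithinAt F F' s X)
    (hF' : ∀ H, F' H = (Gᵀ * H).trace) (hG : G.IsHermitian) (hX : X.IsHermitian) :
    Commute G X := by
  have htangent {K : Matrix m m ℝ} (hK : K ∈ skewAdjoint (Matrix m m ℝ)) :
      K * X - X * K ∈ posTangentConeAt s X :=
    commutator_mem_posTangentConeAt hs hK
  refine commute_of_forall_trace_commutator_eq_zero hG hX fun K hK => ?_
  have hneg : -(K * X - X * K) ∈ posTangentConeAt s X := by
    simpa [sub_eq_add_neg, add_comm] using htangent (neg_mem hK)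
  calc (G * (K * X - X * K)).trace
      = (Gᵀ * (K * X - X * K)).trace := by rw [← conjTranspose_eq_transpose_of_trivial, hG.eq]
    _ = F' (K * X - X * K) := (hF' _).symm
    _ = 0 := hmin.hasFDerivWithinAt_eq_zero hF (htangent hK) hneg

end OrthogonalInvariance

/-- The symmetric matrices whose vector of sorted eigenvalues lies in the polyhedron
`{x | ∀ i, aᵢᵀ x ≤ bᵢ}`: the feasible set of the constraints `gᵢ(X) = aᵢᵀ λ(X) − bᵢ ≤ 0`.
Symmetry is imposed separately because `eigs` takes a junk value at other matrices. -/
def spectralPolyhedron {n : ℕ} {ι : Type*} (a : ι → Fin n → ℝ) (b : ι → ℝ) :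
    Set (Matrix (Fin n) (Fin n) ℝ) :=
  {X | X.IsHermitian ∧ ∀ i, a i ⬝ᵥ eigs X ≤ b i}

section SpectralPolyhedron

variable {n : ℕ} {ι : Type*} {a : ι → Fin n → ℝ} {b : ι → ℝ} {X U V : Matrix (Fin n) (Fin n) ℝ}

theorem orthogonal_conj_mem_spectralPolyhedron (hX : X ∈ spectralPolyhedron a b)
    (hU : U ∈ orthogonalGroup (Fin n) ℝ) : U * X * Uᵀ ∈ spectralPolyhedron a b :=
  ⟨isHermitian_mul_mul_transpose hX.1 U, fun i => by
    rw [eigs_orthogonal_conj hX.1 hU]; exact hX.2 i⟩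

theorem conj_diagonal_mem_spectralPolyhedron {d : Fin n → ℝ}
    (hV : V ∈ orthogonalGroup (Fin n) ℝ) (hd : Antitone d) (hab : ∀ i, a i ⬝ᵥ d ≤ b i) :
    V * diagonal d * Vᵀ ∈ spectralPolyhedron a b :=
  orthogonal_conj_mem_spectralPolyhedron
    ⟨isHermitian_diagonal d, by rwa [eigs_diagonal hd]⟩ hV

theorem conj_diagonal_mem_posTangentConeAt_spectralPolyhedron [Finite ι] {l d : Fin n → ℝ}
    (hV : V ∈ orthogonalGroup (Fin n) ℝ) (hl : StrictAnti l) (hlb : ∀ i, a i ⬝ᵥ l ≤ b i)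
    (hd : ∀ i, a i ⬝ᵥ l = b i → a i ⬝ᵥ d ≤ 0) :
    V * diagonal d * Vᵀ ∈ posTangentConeAt (spectralPolyhedron a b) (V * diagonal l * Vᵀ) := by
  have hline (t : ℝ) : V * diagonal l * Vᵀ + t • (V * diagonal d * Vᵀ) =
      V * diagonal (l + t • d) * Vᵀ := by
    have hdiag : diagonal (l + t • d) = diagonal l + t • diagonal d := by
      rw [← diagonal_smul, diagonal_add]; rfl
    rw [hdiag, Matrix.mul_add, Matrix.add_mul, Matrix.mul_smul, Matrix.smul_mul]
  have hanti : ∀ᶠ t in 𝓝[>] (0 : ℝ), StrictAnti (l + t • d) := by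
    have hcont : Continuous fun t : ℝ => l + t • d := by fun_prop
    exact nhdsWithin_le_nhds <|
      hcont.continuousAt.eventually_mem (isOpen_setOf_strictAnti.mem_nhds (by simpa using hl))
  have hfeas : ∀ᶠ t in 𝓝[>] (0 : ℝ), ∀ i, a i ⬝ᵥ (l + t • d) ≤ b i := by
    simpa only [dotProduct_add, dotProduct_smul, smul_eq_mul, eventually_all] using
      fun i => eventually_nhdsGT_add_mul_le (hlb i) (hd i)
  refine mem_posTangentConeAt_of_frequently_mem (Eventually.frequently ?_)
  filter_upwards [hanti, hfeas] with t ht hab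
  rw [hline]
  exact conj_diagonal_mem_spectralPolyhedron hV ht.antitone hab

end SpectralPolyhedron

theorem statement4_general {n : ℕ} {ι : Type*} [Fintype ι]
    {F : Matrix (Fin n) (Fin n) ℝ → ℝ} {F' : Matrix (Fin n) (Fin n) ℝ →L[ℝ] ℝ}
    {G X V : Matrix (Fin n) (Fin n) ℝ} {a : ι → Fin n → ℝ} {b : ι → ℝ}
    (hX : X ∈ spectralPolyhedron a b) (hmin : IsLocalMinOn F (spectralPolyhedron a b) X)
    (hF : HasFDerivWithinAt F F' (spectralPolyhedron a b) X)
    (hF' : ∀ H, F' H = (Gᵀ * H).trace) (hG : G.IsHermitian)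
    (hinj : Function.Injective (eigs X)) (hV : V ∈ orthogonalGroup (Fin n) ℝ)
    (hXV : X = V * diagonal (eigs X) * Vᵀ) :
    ∃ μ : ι → ℝ, (∀ i, 0 ≤ μ i) ∧ (∀ i, μ i * (a i ⬝ᵥ eigs X - b i) = 0) ∧
      G + ∑ i, μ i • (V * diagonal (a i) * Vᵀ) = 0 := by
  have hcomm : Commute G X :=
    commute_gradient_of_isLocalMinOn (fun _ => orthogonal_conj_mem_spectralPolyhedron hX)
      hmin hF hF' hG hX.1
  obtain ⟨c, rfl⟩ : ∃ c, G = V * diagonal c * Vᵀ :=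
    exists_eq_conj_diagonal_of_commute hV hinj (hXV ▸ hcomm)
  have hlam : StrictAnti (eigs X) := (antitone_eigs hX.1).strictAnti_of_injective hinj
  have hdual (d : Fin n → ℝ) (hd : ∀ i, a i ⬝ᵥ eigs X = b i → a i ⬝ᵥ d ≤ 0) : 0 ≤ c ⬝ᵥ d := by
    have htangent := conj_diagonal_mem_posTangentConeAt_spectralPolyhedron hV hlam hX.2 hd
    rw [← hXV] at htangent
    calc 0 ≤ F' (V * diagonal d * Vᵀ) := hmin.hasFDerivWithinAt_nonneg hF htangent
      _ = c ⬝ᵥ d := by rw [hF', trace_transpose_conj_diagonal_mul hV]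
  obtain ⟨μ, hμ, hinactive, hsum⟩ :=
    exists_nonneg_add_sum_smul_eq_zero_of_forall_dotProduct_nonneg _ a c hdual
  refine ⟨μ, hμ, fun i => ?_, ?_⟩
  · rw [mul_eq_zero, sub_eq_zero, or_iff_not_imp_right]
    exact hinactive i
  · rw [← conj_diagonal_add_sum_smul, hsum, diagonal_zero', Matrix.mul_zero, Matrix.zero_mul]

/-- KKT conditions at a local minimizer with pairwise distinct eigenvalues:
if `F` is continuously differentiable (with symmetric Frobenius gradient `gradF`),
`gᵢ(X) = aᵢᵀ λ(X) − bᵢ`, `X*` is a local minimizer of `F` over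
`{X ∈ S^{n×n} : gᵢ(X) ≤ 0}` whose eigenvalues are pairwise distinct, with
eigendecomposition `X* = V Diag(λ(X*)) Vᵀ` (`V` orthogonal), and the active
gradient vectors `{aᵢ : gᵢ(X*) = 0}` are linearly independent, then there are
multipliers `μ ≥ 0` with `μᵢ gᵢ(X*) = 0` and
`∇F(X*) + Σᵢ μᵢ V Diag(aᵢ) Vᵀ = 0`. -/
theorem statement4 {n p : ℕ}
    (F : Matrix (Fin n) (Fin n) ℝ → ℝ)
    (gradF : Matrix (Fin n) (Fin n) ℝ → Matrix (Fin n) (Fin n) ℝ)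
    (hdiff : Differentiable ℝ F)
    (hgrad : ∀ X H, fderiv ℝ F X H = ∑ i, ∑ j, gradF X i j * H i j)
    (hgradCont : Continuous gradF)
    (hgradSym : ∀ X, (gradF X).IsHermitian)
    (a : Fin p → Fin n → ℝ) (b : Fin p → ℝ)
    (g : Matrix (Fin n) (Fin n) ℝ → Fin p → ℝ)
    (hg : ∀ X i, g X i = (∑ j, a i j * eigs X j) - b i)
    (Xstar : Matrix (Fin n) (Fin n) ℝ)
    (hXfeas : Xstar ∈ {X : Matrix (Fin n) (Fin n) ℝ | X.IsHermitian ∧ ∀ i, g X i ≤ 0})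
    (hmin : IsLocalMinOn F {X : Matrix (Fin n) (Fin n) ℝ | X.IsHermitian ∧ ∀ i, g X i ≤ 0} Xstar)
    (hdistinct : Function.Injective (eigs Xstar))
    (V : Matrix (Fin n) (Fin n) ℝ)
    (hV : Vᵀ * V = 1) (hV' : V * Vᵀ = 1)
    (hdecomp : Xstar = V * Matrix.diagonal (eigs Xstar) * Vᵀ)
    (hLI : LinearIndependent ℝ (fun i : {i : Fin p // g Xstar i = 0} => a i.1)) :
    ∃ μ : Fin p → ℝ, (∀ i, 0 ≤ μ i) ∧ (∀ i, μ i * g Xstar i = 0) ∧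
      gradF Xstar + ∑ i, μ i • (V * Matrix.diagonal (a i) * Vᵀ) = 0 := by
  simp only [hg, sub_nonpos] at hXfeas hmin ⊢
  exact statement4_general hXfeas hmin (hdiff Xstar).hasFDerivAt.hasFDerivWithinAt
    (fun H => (hgrad Xstar H).trans (sum_mul_eq_trace_transpose_mul _ H)) (hgradSym Xstar) hdistinct
    ((mem_orthogonalGroup_iff _ _).2 hV') hdecomp
end

section
/- Let V be a real inner product space and F : V → ℝ Fréchet differentiable with L-Lipschitz gradient (‖∇F(x) − ∇F(y)‖ ≤ L‖x − y‖ for all x, y). Let X, D ∈ V with ‖D − X‖² ≤ ρ, let Θ > 0 satisfy Θ ≥ ρL, set m := ⟨∇F(X), D − X⟩ and assume m ≤ 0, and let γ := min{|m|/Θ, 1}. Then: (i) if |m| ≤ Θ, F(X + γ(D − X)) ≤ F(X) − m²/(2Θ); (ii) if |m| > Θ, F(X + γ(D − X)) ≤ F(X) − (|m| − Θ/2). -/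
/-!
Along the segment from `X` to `D` the derivative of `F` in the direction `D - X` grows at rate at
most `L ‖D - X‖ ^ 2 ≤ Θ`, so `F (X + t • (D - X)) ≤ F X + t m + (Θ / 2) t ^ 2` for `t ∈ [0, 1]`.
The step size `γ` minimizes this quadratic over `[0, 1]`: its vertex is `|m| / Θ`, and the two
cases are whether the vertex lies in `[0, 1]` or beyond it.
-/

open Set

theorem le_quadratic_of_hasDerivWithinAt_le {g g' : ℝ → ℝ} {a b m c : ℝ}
    (hg : ∀ t ∈ Icc a b, HasDerivWithinAt g (g' t) (Icc a b) t)
    (hg' : ∀ t ∈ Ico a b, g' t ≤ m + c * (t - a)) {t : ℝ} (ht : t ∈ Icc a b) :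
    g t ≤ g a + (t - a) * m + c / 2 * (t - a) ^ 2 := by
  have hquad (s : ℝ) : HasDerivAt (fun s => g a + (s - a) * m + c / 2 * (s - a) ^ 2)
      (m + c * (s - a)) s := by
    have hsub : HasDerivAt (fun s => s - a) 1 s := (hasDerivAt_id s).sub_const a
    refine (((hsub.mul_const m).const_add (g a)).add
      ((hsub.pow 2).const_mul (c / 2))).congr_deriv ?_
    push_cast
    ring
  exact image_le_of_deriv_right_le_deriv_boundary (f := g)
    (fun s hs => (hg s hs).continuousWithinAt)
    (fun s hs => (hg s (Ico_subset_Icc_self hs)).mono_of_mem_nhdsWithin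
      (Icc_mem_nhdsGE_of_mem hs))
    (by simp) (fun s _ => (hquad s).continuousAt.continuousWithinAt)
    (fun s _ => (hquad s).hasDerivWithinAt) hg' ht

theorem mul_sq_le_of_sq_le_of_mul_le {r L ρ Θ : ℝ} (hr : 0 ≤ r) (hLr : 0 ≤ L * r)
    (hΘ : 0 ≤ Θ) (hrρ : r ^ 2 ≤ ρ) (hρΘ : ρ * L ≤ Θ) : L * r ^ 2 ≤ Θ := by
  rcases hr.eq_or_lt with rfl | hr_pos
  · simpa using hΘ
  · have hL : 0 ≤ L := nonneg_of_mul_nonneg_left hLr hr_pos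
    calc L * r ^ 2 ≤ L * ρ := mul_le_mul_of_nonneg_left hrρ hL
      _ = ρ * L := mul_comm L ρ
      _ ≤ Θ := hρΘ

theorem add_smul_sub_mem_segment {𝕜 E : Type*} [Ring 𝕜] [PartialOrder 𝕜] [AddRightMono 𝕜]
    [AddCommGroup E] [Module 𝕜 E] {x y : E} {t : 𝕜} (ht : t ∈ Icc (0 : 𝕜) 1) :
    x + t • (y - x) ∈ segment 𝕜 x y :=
  segment_eq_image' 𝕜 x y ▸ mem_image_of_mem _ ht

section Segment

variable {E : Type*} [NormedAddCommGroup E] [NormedSpace ℝ E] {x y : E}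

theorem hasDerivWithinAt_comp_add_smul_sub {G : Type*} [NormedAddCommGroup G] [NormedSpace ℝ G]
    {f : E → G} {f' : E →L[ℝ] G} {t : ℝ}
    (hf : HasFDerivWithinAt f f' (segment ℝ x y) (x + t • (y - x))) :
    HasDerivWithinAt (fun s : ℝ => f (x + s • (y - x))) (f' (y - x)) (Icc 0 1) t := by
  have hline : HasDerivAt (fun s : ℝ => x + s • (y - x)) (y - x) t := by
    simpa using ((hasDerivAt_id t).smul_const (y - x)).const_add x
  exact hf.comp_hasDerivWithinAt t hline.hasDerivWithinAt fun _ => add_smul_sub_mem_segment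

theorem apply_add_smul_sub_le_of_norm_fderiv_sub_le {f : E → ℝ} {f' : E → E →L[ℝ] ℝ} {L : ℝ}
    (hf : ∀ z ∈ segment ℝ x y, HasFDerivWithinAt f (f' z) (segment ℝ x y) z)
    (hf' : ∀ z ∈ segment ℝ x y, ‖f' z - f' x‖ ≤ L * ‖z - x‖) {t : ℝ} (ht : t ∈ Icc (0 : ℝ) 1) :
    f (x + t • (y - x)) ≤ f x + t * f' x (y - x) + L * ‖y - x‖ ^ 2 / 2 * t ^ 2 := by
  have hslope (s : ℝ) (hs : s ∈ Ico (0 : ℝ) 1) :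
      f' (x + s • (y - x)) (y - x) ≤ f' x (y - x) + L * ‖y - x‖ ^ 2 * (s - 0) := by
    rw [← sub_le_iff_le_add']
    calc f' (x + s • (y - x)) (y - x) - f' x (y - x)
        = (f' (x + s • (y - x)) - f' x) (y - x) := rfl
      _ ≤ ‖f' (x + s • (y - x)) - f' x‖ * ‖y - x‖ :=
          (Real.le_norm_self _).trans (ContinuousLinearMap.le_opNorm _ _)
      _ ≤ L * ‖x + s • (y - x) - x‖ * ‖y - x‖ := by
          gcongr
          exact hf' _ (add_smul_sub_mem_segment (Ico_subset_Icc_self hs))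
      _ = L * ‖y - x‖ ^ 2 * (s - 0) := by
          rw [add_sub_cancel_left, norm_smul, Real.norm_of_nonneg hs.1]
          ring
  simpa using le_quadratic_of_hasDerivWithinAt_le
    (fun s hs => hasDerivWithinAt_comp_add_smul_sub (hf _ (add_smul_sub_mem_segment hs)))
    hslope ht

end Segment

theorem statement11_general {V : Type*} [NormedAddCommGroup V] [NormedSpace ℝ V]
    (F : V → ℝ) (F' : V → V →L[ℝ] ℝ) (L : ℝ) (X D : V)
    (hdiff : ∀ x ∈ segment ℝ X D, HasFDerivWithinAt F (F' x) (segment ℝ X D) x)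
    (hLip : ∀ x ∈ segment ℝ X D, ‖F' x - F' X‖ ≤ L * ‖x - X‖)
    (ρ Θ : ℝ)
    (hρ : ‖D - X‖ ^ 2 ≤ ρ)
    (hΘpos : 0 < Θ) (hΘ : ρ * L ≤ Θ)
    (m γ : ℝ)
    (hm : m = F' X (D - X)) (hm0 : m ≤ 0)
    (hγ : γ = min (|m| / Θ) 1) :
    (|m| ≤ Θ → F (X + γ • (D - X)) ≤ F X - m ^ 2 / (2 * Θ)) ∧
    (Θ < |m| → F (X + γ • (D - X)) ≤ F X - (|m| - Θ / 2)) := by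
  have hcurv : L * ‖D - X‖ ^ 2 ≤ Θ :=
    mul_sq_le_of_sq_le_of_mul_le (norm_nonneg _)
      ((norm_nonneg _).trans (hLip D (right_mem_segment ℝ X D))) hΘpos.le hρ hΘ
  have hγ_mem : γ ∈ Icc (0 : ℝ) 1 := by
    rw [hγ]
    exact ⟨le_min (by positivity) zero_le_one, min_le_right _ _⟩
  have hdescent : F (X + γ • (D - X)) ≤ F X + γ * m + Θ / 2 * γ ^ 2 := by
    rw [hm]
    exact (apply_add_smul_sub_le_of_norm_fderiv_sub_le hdiff hLip hγ_mem).trans (by gcongr)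
  rw [abs_of_nonpos hm0] at hγ ⊢
  refine ⟨fun hle => hdescent.trans_eq ?_, fun hlt => hdescent.trans_eq ?_⟩
  · rw [hγ, min_eq_left ((div_le_one hΘpos).mpr hle)]
    field_simp
    ring
  · rw [hγ, min_eq_right ((one_le_div hΘpos).mpr hlt.le)]
    ring

/-- One step of the Frank–Wolfe method: with `m = ⟨∇F(X), D − X⟩ ≤ 0`,
`‖D − X‖² ≤ ρ`, `Θ ≥ ρL` and `γ = min{|m|/Θ, 1}`, the objective decreases by
`m²/(2Θ)` when `|m| ≤ Θ` and by `|m| − Θ/2` when `|m| > Θ`. -/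
theorem statement11 {V : Type*} [NormedAddCommGroup V] [InnerProductSpace ℝ V]
    (F : V → ℝ) (gradF : V → V) (L : ℝ)
    (hdiff : ∀ x, HasFDerivAt F (innerSL ℝ (gradF x)) x)
    (hLip : ∀ x y, ‖gradF x - gradF y‖ ≤ L * ‖x - y‖)
    (X D : V) (ρ Θ : ℝ)
    (hρ : ‖D - X‖ ^ 2 ≤ ρ)
    (hΘpos : 0 < Θ) (hΘ : ρ * L ≤ Θ)
    (m γ : ℝ)
    (hm : m = (inner ℝ (gradF X) (D - X) : ℝ)) (hm0 : m ≤ 0)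
    (hγ : γ = min (|m| / Θ) 1) :
    (|m| ≤ Θ → F (X + γ • (D - X)) ≤ F X - m ^ 2 / (2 * Θ)) ∧
    (Θ < |m| → F (X + γ • (D - X)) ≤ F X - (|m| - Θ / 2)) :=
  statement11_general F (fun x => innerSL ℝ (gradF x)) L X D
    (fun x _ => (hdiff x).hasFDerivWithinAt)
    (fun x _ => by simpa only [← map_sub, innerSL_apply_norm] using hLip x X)
    ρ Θ hρ hΘpos hΘ m γ hm hm0 hγ
end

section
/- Let Θ > 0, F* ∈ ℝ, and let (F_k)_{k≥0} and (m_k)_{k≥0} be real sequences with F_k ≥ F* for all k, and such that for every k: F_{k+1} ≤ F_k − m_k²/(2Θ) whenever |m_k| ≤ Θ, and F_{k+1} ≤ F_k − (|m_k| − Θ/2) whenever |m_k| > Θ. Then for every K ≥ 0, min_{0 ≤ k ≤ K} |m_k| ≤ max{2(F₀ − F*), Θ} / √(K+1). -/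
/-!
The two decrease conditions say that `F` drops at step `k` by at least the Huber function of `m k`.
This function is increasing in `|m k|`, so each of the first `K + 1` steps decreases `F` by at least
its value at the smallest `|m k|`, and telescoping bounds `K + 1` times this value by `F 0 - Fstar`.
In the quadratic regime this gives the rate `1 / √(K + 1)`; in the linear regime it gives the better
rate `1 / (K + 1)`.
-/

section Huber

/-- The Huber function with threshold `Θ`, normalized to have slope `1` outside `[-Θ, Θ]` (it is
`Θ⁻¹` times the usual Huber loss); it merges the two decrease conditions into one. -/
noncomputable def huber (Θ t : ℝ) : ℝ :=
  if |t| ≤ Θ then t ^ 2 / (2 * Θ) else |t| - Θ / 2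

variable {Θ s t : ℝ}

theorem huber_of_abs_le (ht : |t| ≤ Θ) : huber Θ t = t ^ 2 / (2 * Θ) :=
  if_pos ht

theorem huber_of_lt_abs (ht : Θ < |t|) : huber Θ t = |t| - Θ / 2 :=
  if_neg ht.not_ge

theorem huber_le_half_of_abs_le (hΘ : 0 < Θ) (ht : |t| ≤ Θ) : huber Θ t ≤ Θ / 2 := by
  have sq_le : t ^ 2 ≤ Θ ^ 2 := sq_le_sq' (neg_le_of_abs_le ht) (le_of_abs_le ht)
  rw [huber_of_abs_le ht, div_le_iff₀ (by positivity)]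
  linarith

theorem huber_le_huber_of_abs_le_abs (hΘ : 0 < Θ) (hst : |s| ≤ |t|) : huber Θ s ≤ huber Θ t := by
  rcases le_or_gt |t| Θ with ht | ht
  · rw [huber_of_abs_le ht, huber_of_abs_le (hst.trans ht)]
    have sq_le : s ^ 2 ≤ t ^ 2 := sq_le_sq.mpr hst
    gcongr
  · rw [huber_of_lt_abs ht]
    rcases le_or_gt |s| Θ with hs | hs
    · linarith [huber_le_half_of_abs_le hΘ hs]
    · rw [huber_of_lt_abs hs]
      gcongr

theorem abs_mul_sqrt_le_max_of_mul_huber_le (hΘ : 0 < Θ) {x D : ℝ} (hx : 1 ≤ x)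
    (h : x * huber Θ t ≤ D) : |t| * √x ≤ max (2 * D) Θ := by
  have hx₀ : 0 ≤ x := zero_le_one.trans hx
  rcases le_or_gt |t| Θ with ht | ht
  · rw [huber_of_abs_le ht, mul_div_assoc', div_le_iff₀ (by positivity)] at h
    have max_nonneg : 0 ≤ max (2 * D) Θ := hΘ.le.trans (le_max_right _ _)
    refine le_of_abs_le (abs_le_of_sq_le_sq ?_ max_nonneg)
    calc (|t| * √x) ^ 2 = x * t ^ 2 := by rw [mul_pow, sq_abs, Real.sq_sqrt hx₀, mul_comm]
      _ ≤ 2 * D * Θ := by linarith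
      _ ≤ max (2 * D) Θ * max (2 * D) Θ :=
        mul_le_mul (le_max_left _ _) (le_max_right _ _) hΘ.le max_nonneg
      _ = max (2 * D) Θ ^ 2 := (sq _).symm
  · rw [huber_of_lt_abs ht] at h
    have sqrt_le : √x ≤ x := Real.sqrt_le_self_iff.mpr (Or.inr hx)
    calc |t| * √x ≤ |t| * x := by gcongr
      _ = 2 * (x * (|t| / 2)) := by ring
      _ ≤ 2 * (x * (|t| - Θ / 2)) := by gcongr; linarith
      _ ≤ 2 * D := by gcongr
      _ ≤ max (2 * D) Θ := le_max_left _ _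

end Huber

theorem nsmul_le_sub_of_forall_le_sub {G : Type*} [AddCommGroup G] [PartialOrder G]
    [IsOrderedAddMonoid G] {F : ℕ → G} {d : G} {n : ℕ} (h : ∀ k < n, d ≤ F k - F (k + 1)) :
    n • d ≤ F 0 - F n := by
  calc n • d = (Finset.range n).card • d := by rw [Finset.card_range]
    _ ≤ ∑ k ∈ Finset.range n, (F k - F (k + 1)) :=
      Finset.card_nsmul_le_sum _ _ d fun k hk => h k (Finset.mem_range.mp hk)
    _ = F 0 - F n := Finset.sum_range_sub' F n

/-- Sublinear rate for the Frank–Wolfe gap: if `F_k ≥ F*` for all `k` and the decrease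
conditions `F_{k+1} ≤ F_k − m_k²/(2Θ)` (when `|m_k| ≤ Θ`) and
`F_{k+1} ≤ F_k − (|m_k| − Θ/2)` (when `|m_k| > Θ`) hold, then for every `K ≥ 0`,
`min_{0 ≤ k ≤ K} |m_k| ≤ max{2(F₀ − F*), Θ}/√(K+1)`. -/
theorem statement12 (Θ Fstar : ℝ) (hΘ : 0 < Θ)
    (F m : ℕ → ℝ)
    (hbdd : ∀ k, Fstar ≤ F k)
    (hdec₁ : ∀ k, |m k| ≤ Θ → F (k + 1) ≤ F k - (m k) ^ 2 / (2 * Θ))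
    (hdec₂ : ∀ k, Θ < |m k| → F (k + 1) ≤ F k - (|m k| - Θ / 2)) :
    ∀ K : ℕ, (Finset.range (K + 1)).inf' (by simp) (fun k => |m k|) ≤
      max (2 * (F 0 - Fstar)) Θ / Real.sqrt (K + 1) := by
  intro K
  obtain ⟨j, -, hj⟩ := Finset.exists_mem_eq_inf' (Finset.nonempty_range_add_one (n := K))
    fun k => |m k|
  have j_min : ∀ k < K + 1, |m j| ≤ |m k| := fun k hk =>
    hj ▸ Finset.inf'_le _ (Finset.mem_range.mpr hk)
  have huber_le_decrease : ∀ k, huber Θ (m k) ≤ F k - F (k + 1) := fun k => by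
    rcases le_or_gt |m k| Θ with hm | hm
    · linarith [hdec₁ k hm, huber_of_abs_le hm]
    · linarith [hdec₂ k hm, huber_of_lt_abs hm]
  have telescoped : (K + 1) * huber Θ (m j) ≤ F 0 - Fstar := by
    have h : (K + 1) • huber Θ (m j) ≤ F 0 - F (K + 1) := nsmul_le_sub_of_forall_le_sub fun k hk =>
      (huber_le_huber_of_abs_le_abs hΘ (j_min k hk)).trans (huber_le_decrease k)
    rw [nsmul_eq_mul, Nat.cast_add_one] at h
    linarith [hbdd (K + 1)]
  rw [hj, le_div_iff₀ (by positivity)]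
  exact abs_mul_sqrt_le_max_of_mul_huber_le hΘ (by simp) telescoped
end
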